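/- Let D be a bounded domain in ℂⁿ, and let U and V be open neighborhoods of ∂D such that the closure of V is a compact subset of U. Then there exists a constant c > 0 such that for every connected component D' of D ∩ U and all z, w ∈ D' ∩ V one has c·k_{D'}(z,w) ≤ k_D(z,w). -/

import Mathlib

open Metric Set

noncomputable section

/-- Inverse hyperbolic tangent: `artanh t = (1/2) * log ((1+t)/(1-t))`. -/
def artanh (x : ℝ) : ℝ := Real.log ((1 + x) / (1 - x)) / 2

variable {E : Type*} [NormedAddCommGroup E] [NormedSpace ℂ E]

/-- The Lempert function of a set `D ⊆ E`:
`l_D(z,w) = inf { artanh |α| : ∃ φ : 𝔻 → D holomorphic, φ 0 = z, φ α = w }`. -/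
def lempert (D : Set E) (z w : E) : ℝ :=
  sInf { r : ℝ | ∃ α : ℂ, ‖α‖ < 1 ∧
    (∃ φ : ℂ → E, DifferentiableOn ℂ φ (ball 0 1) ∧ MapsTo φ (ball 0 1) D ∧
      φ 0 = z ∧ φ α = w) ∧ r = artanh ‖α‖ }

/-- The Kobayashi pseudodistance: infimum of `∑ l_D(z_{i-1}, z_i)` over all finite
chains of points `z = c 0, c 1, …, c m = w` in `D`. -/
def kobayashi (D : Set E) (z w : E) : ℝ :=
  sInf { r : ℝ | ∃ (m : ℕ) (c : ℕ → E), c 0 = z ∧ c m = w ∧ (∀ i ≤ m, c i ∈ D) ∧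
    r = ∑ i ∈ Finset.range m, lempert D (c i) (c (i + 1)) }

/-- The Carathéodory pseudodistance:
`c_D(z,w) = sup { artanh |f w| : f : D → 𝔻 holomorphic, f z = 0 }`. -/
def caratheodory (D : Set E) (z w : E) : ℝ :=
  sSup { r : ℝ | ∃ f : E → ℂ, DifferentiableOn ℂ f D ∧ MapsTo f D (ball 0 1) ∧
    f z = 0 ∧ r = artanh ‖f w‖ }

/-- `(D, d)` is Gromov hyperbolic if
`sup_{p,q,x,w ∈ D} ( min{(p,x)_w, (x,q)_w} − (p,q)_w ) < ∞`, where
`(x,y)_z = d x z + d z y - d x y` is the Gromov product. -/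
def GromovHyperbolicWith (D : Set E) (d : E → E → ℝ) : Prop :=
  ∃ C : ℝ, ∀ p ∈ D, ∀ q ∈ D, ∀ x ∈ D, ∀ w ∈ D,
    min (d p w + d w x - d p x) (d x w + d w q - d x q) - (d p w + d w q - d p q) ≤ C

end

/-!
Write `K = closure V ∩ closure D`, a compact subset of `U`. In the strip model `{|Im z| < π / 4}` of
the disc, real translations are automorphisms, so every holomorphic disc in `D` can be subdivided
into arbitrarily short discs without changing the total length. A short disc starting near `K`
stays in `D ∩ U` after its parameter is shrunk by a fixed factor, so chains of short discs
that remain near `K` lengthen at most by a constant when moved into `D ∩ U`. Any other chain between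
points of `V` passes through a compact shell in `D` around `K` when it first leaves and when it last
returns. The part in between is replaced by a path in `D ∩ U` of bounded length; this additive error
is absorbed into the constant, because travelling from `V` to the shell has a definite cost.
-/

section Artanh

lemma artanh_eq_real_artanh {x : ℝ} (hx : x ∈ Icc (-1) 1) : artanh x = Real.artanh x := by
  rw [artanh, Real.artanh_eq_half_log hx]
  ring

lemma artanh_tanh (t : ℝ) : artanh (Real.tanh t) = t := by
  rw [artanh_eq_real_artanh ⟨(Real.neg_one_lt_tanh t).le, (Real.tanh_lt_one t).le⟩,
    Real.artanh_tanh]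

lemma tanh_artanh {x : ℝ} (hx : x ∈ Ioo (-1) 1) : Real.tanh (artanh x) = x := by
  rw [artanh_eq_real_artanh (Ioo_subset_Icc_self hx), Real.tanh_artanh hx]

lemma le_artanh {x : ℝ} (hx₀ : 0 ≤ x) (hx₁ : x < 1) : x ≤ artanh x := by
  have hseries := Real.hasSum_log_sub_log_of_abs_lt_one (abs_lt.2 ⟨by linarith, hx₁⟩)
  have hfirst := hseries.summable.le_tsum 0 fun k _ ↦ by positivity
  rw [hseries.tsum_eq, ← Real.log_div (by linarith) (by linarith)] at hfirst
  norm_num at hfirst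
  rw [artanh]
  linarith

lemma artanh_nonneg {x : ℝ} (hx₀ : 0 ≤ x) (hx₁ : x < 1) : 0 ≤ artanh x :=
  hx₀.trans (le_artanh hx₀ hx₁)

lemma artanh_le_two_mul {x : ℝ} (hx₀ : 0 ≤ x) (hx : x ≤ 1 / 2) : artanh x ≤ 2 * x := by
  have hquot : (1 + x) / (1 - x) ≤ 1 + 4 * x := by
    rw [div_le_iff₀ (by linarith)]
    nlinarith
  have hlog := Real.log_le_sub_one_of_pos (div_pos (by linarith) (by linarith) :
    0 < (1 + x) / (1 - x))
  rw [artanh]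
  linarith

lemma tanh_nonneg {t : ℝ} (ht : 0 ≤ t) : 0 ≤ Real.tanh t := by
  rw [Real.tanh_eq_sinh_div_cosh]
  exact div_nonneg (Real.sinh_nonneg_iff.2 ht) (Real.cosh_pos t).le

end Artanh

section Strip

open Complex (cosh sinh)

/-- The horizontal strip `{|Im z| < π / 4}`, which `tanh` maps biholomorphically onto the unit disc.
Real translations act on it by automorphisms, and the distance from `0` to `tanh t` in the disc
becomes the distance from `0` to `t`. -/
def strip : Set ℂ := {z | |z.im| < Real.pi / 4}

/-- The inverse of `tanh : strip → 𝔻`. -/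
noncomputable def discToStrip (ζ : ℂ) : ℂ := Complex.log ((1 + ζ) / (1 - ζ)) / 2

lemma ofReal_add_mem_strip {z : ℂ} (hz : z ∈ strip) (t : ℝ) : t + z ∈ strip := by
  simpa [strip] using hz

lemma normSq_cosh_sub_normSq_sinh (z : ℂ) :
    Complex.normSq (cosh z) - Complex.normSq (sinh z) = Real.cos (2 * z.im) := by
  have hfactor (a b : ℂ) :
      Complex.normSq a - Complex.normSq b = ((a - b) * starRingEnd ℂ (a + b)).re := by
    simp only [Complex.normSq_apply, map_add, Complex.mul_re, Complex.sub_re, Complex.add_re,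
      Complex.sub_im, Complex.add_im, Complex.conj_re, Complex.conj_im]
    ring
  rw [hfactor, Complex.cosh_sub_sinh, Complex.cosh_add_sinh, ← Complex.exp_conj, ← Complex.exp_add,
    Complex.exp_re]
  simp [← two_mul]

lemma norm_sinh_lt_norm_cosh {z : ℂ} (hz : z ∈ strip) : ‖sinh z‖ < ‖cosh z‖ := by
  have him := abs_lt.1 (show |z.im| < Real.pi / 4 from hz)
  have hcos : 0 < Real.cos (2 * z.im) := Real.cos_pos_of_mem_Ioo ⟨by linarith, by linarith⟩
  rw [← normSq_cosh_sub_normSq_sinh, Complex.normSq_eq_norm_sq, Complex.normSq_eq_norm_sq,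
    sub_pos] at hcos
  exact lt_of_pow_lt_pow_left₀ 2 (norm_nonneg _) hcos

lemma cosh_ne_zero_of_mem_strip {z : ℂ} (hz : z ∈ strip) : cosh z ≠ 0 :=
  norm_pos_iff.1 ((norm_nonneg _).trans_lt (norm_sinh_lt_norm_cosh hz))

lemma differentiableOn_tanh_strip : DifferentiableOn ℂ Complex.tanh strip := by
  refine DifferentiableOn.congr (f := fun z ↦ sinh z / cosh z) ?_
    fun z _ ↦ Complex.tanh_eq_sinh_div_cosh z
  exact Complex.differentiable_sinh.differentiableOn.div
    Complex.differentiable_cosh.differentiableOn fun _ ↦ cosh_ne_zero_of_mem_strip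

lemma mapsTo_tanh_strip : MapsTo Complex.tanh strip (ball 0 1) := by
  intro z hz
  rw [mem_ball_zero_iff, Complex.tanh_eq_sinh_div_cosh, norm_div,
    div_lt_one (norm_pos_iff.2 (cosh_ne_zero_of_mem_strip hz))]
  exact norm_sinh_lt_norm_cosh hz

lemma one_sub_ne_zero_of_norm_lt_one {ζ : ℂ} (hζ : ‖ζ‖ < 1) : 1 - ζ ≠ 0 := by
  rintro h
  simp [← sub_eq_zero.1 h] at hζ

lemma re_one_add_div_one_sub_pos {ζ : ℂ} (hζ : ‖ζ‖ < 1) : 0 < ((1 + ζ) / (1 - ζ)).re := by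
  have hsq : Complex.normSq ζ < 1 := by
    rw [Complex.normSq_eq_norm_sq]
    exact pow_lt_one₀ (norm_nonneg ζ) hζ two_ne_zero
  rw [Complex.div_re, ← add_div]
  refine div_pos ?_ (Complex.normSq_pos.2 (one_sub_ne_zero_of_norm_lt_one hζ))
  rw [Complex.normSq_apply] at hsq
  simp only [Complex.add_re, Complex.sub_re, Complex.one_re, Complex.add_im, Complex.sub_im,
    Complex.one_im]
  linarith

lemma differentiableOn_discToStrip : DifferentiableOn ℂ discToStrip (ball 0 1) := by
  intro ζ hζ
  rw [mem_ball_zero_iff] at hζ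
  have hquot : DifferentiableAt ℂ (fun ζ : ℂ ↦ (1 + ζ) / (1 - ζ)) ζ :=
    DifferentiableAt.div (by fun_prop) (by fun_prop) (one_sub_ne_zero_of_norm_lt_one hζ)
  exact ((hquot.clog (.inl (re_one_add_div_one_sub_pos hζ))).div_const 2).differentiableWithinAt

lemma mapsTo_discToStrip : MapsTo discToStrip (ball 0 1) strip := by
  intro ζ hζ
  have harg := Complex.abs_arg_lt_pi_div_two_iff.2
    (.inl (re_one_add_div_one_sub_pos (mem_ball_zero_iff.1 hζ)))
  rw [strip, mem_ofPred_eq, discToStrip, Complex.div_ofNat_im, Complex.log_im, abs_div, abs_two]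
  linarith

lemma discToStrip_tanh (t : ℝ) : discToStrip (Real.tanh t) = t := by
  have hquot : 0 ≤ (1 + Real.tanh t) / (1 - Real.tanh t) :=
    div_nonneg (by linarith [Real.neg_one_lt_tanh t]) (by linarith [Real.tanh_lt_one t])
  calc discToStrip (Real.tanh t) = (artanh (Real.tanh t) : ℝ) := by
        rw [discToStrip, artanh, Complex.ofReal_div, Complex.ofReal_log hquot]
        push_cast
        rfl
    _ = t := by rw [artanh_tanh]

end Strip

section DiscLengths

variable {E : Type*} [NormedAddCommGroup E] [NormedSpace ℂ E] {D : Set E} {a b : E} {t : ℝ}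

/-- The numbers `artanh |α|` for which some holomorphic `φ : 𝔻 → D` has `φ 0 = a` and `φ α = b`;
their infimum is the Lempert function. -/
def discLengths (D : Set E) (a b : E) : Set ℝ :=
  {r : ℝ | ∃ α : ℂ, ‖α‖ < 1 ∧
    (∃ φ : ℂ → E, DifferentiableOn ℂ φ (ball 0 1) ∧ MapsTo φ (ball 0 1) D ∧
      φ 0 = a ∧ φ α = b) ∧ r = artanh ‖α‖}

lemma nonneg_of_mem_discLengths (ht : t ∈ discLengths D a b) : 0 ≤ t := by
  obtain ⟨α, hα, -, rfl⟩ := ht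
  exact artanh_nonneg (norm_nonneg α) hα

lemma left_mem_of_mem_discLengths (ht : t ∈ discLengths D a b) : a ∈ D := by
  obtain ⟨α, -, ⟨φ, -, hφD, rfl, -⟩, -⟩ := ht
  exact hφD (mem_ball_self one_pos)

lemma right_mem_of_mem_discLengths (ht : t ∈ discLengths D a b) : b ∈ D := by
  obtain ⟨α, hα, ⟨φ, -, hφD, -, rfl⟩, -⟩ := ht
  exact hφD (mem_ball_zero_iff.2 hα)

lemma mem_discLengths_connectedComponentIn (ht : t ∈ discLengths D a b) :
    t ∈ discLengths (connectedComponentIn D a) a b := by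
  obtain ⟨α, hα, ⟨φ, hφ, hφD, rfl, rfl⟩, rfl⟩ := ht
  refine ⟨α, hα, ⟨φ, hφ, mapsTo_iff_image_subset.2 ?_, rfl, rfl⟩, rfl⟩
  exact ((convex_ball (0 : ℂ) 1).isPreconnected.image φ hφ.continuousOn).subset_connectedComponentIn
    (mem_image_of_mem φ (mem_ball_self one_pos)) hφD.image_subset

lemma dist_le_diam_mul_norm (hD : Bornology.IsBounded D) {φ : ℂ → E}
    (hφ : DifferentiableOn ℂ φ (ball 0 1)) (hφD : MapsTo φ (ball 0 1) D) {ζ : ℂ} (hζ : ‖ζ‖ < 1) :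
    dist (φ 0) (φ ζ) ≤ diam D * ‖ζ‖ := by
  have hmaps : MapsTo φ (ball 0 1) (closedBall (φ 0) (diam D)) := fun ξ hξ ↦
    dist_le_diam_of_mem hD (hφD hξ) (hφD (mem_ball_self one_pos))
  simpa [dist_comm (φ 0)] using
    Complex.dist_le_div_mul_dist_of_mapsTo_ball hφ hmaps (mem_ball_zero_iff.2 hζ)

lemma dist_le_diam_mul_of_mem_discLengths (hD : Bornology.IsBounded D)
    (ht : t ∈ discLengths D a b) : dist a b ≤ diam D * t := by
  obtain ⟨α, hα, ⟨φ, hφ, hφD, rfl, rfl⟩, rfl⟩ := ht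
  refine (dist_le_diam_mul_norm hD hφ hφD hα).trans ?_
  gcongr
  exact le_artanh (norm_nonneg α) hα

lemma sub_mem_discLengths {F : ℂ → E} (hF : DifferentiableOn ℂ F strip) (hFD : MapsTo F strip D)
    {s t : ℝ} (hst : s ≤ t) : t - s ∈ discLengths D (F s) (F t) := by
  have hnorm : ‖((Real.tanh (t - s) : ℝ) : ℂ)‖ = Real.tanh (t - s) :=
    Complex.norm_of_nonneg (tanh_nonneg (sub_nonneg.2 hst))
  have hshift : MapsTo (fun ζ ↦ s + discToStrip ζ) (ball 0 1) strip := fun ζ hζ ↦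
    ofReal_add_mem_strip (mapsTo_discToStrip hζ) s
  refine ⟨(Real.tanh (t - s) : ℝ), hnorm.trans_lt (Real.tanh_lt_one _),
    ⟨fun ζ ↦ F (s + discToStrip ζ), hF.comp (differentiableOn_discToStrip.const_add _) hshift,
      hFD.comp hshift, ?_, ?_⟩, by rw [hnorm, artanh_tanh]⟩
  · simp [discToStrip]
  · simp only [discToStrip_tanh, Complex.ofReal_sub, add_sub_cancel]

lemma exists_strip_of_mem_discLengths (ht : t ∈ discLengths D a b) :
    ∃ F : ℂ → E, DifferentiableOn ℂ F strip ∧ MapsTo F strip D ∧ F 0 = a ∧ F t = b := by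
  obtain ⟨α, hα, ⟨φ, hφ, hφD, rfl, rfl⟩, rfl⟩ := ht
  set u : ℂ := Complex.exp (α.arg * Complex.I)
  have hrot : MapsTo (fun z ↦ u * Complex.tanh z) strip (ball 0 1) := fun z hz ↦ by
    simpa [u, Complex.norm_exp_ofReal_mul_I] using mapsTo_tanh_strip hz
  refine ⟨fun z ↦ φ (u * Complex.tanh z), hφ.comp (differentiableOn_tanh_strip.const_mul u) hrot,
    hφD.comp hrot, by simp, ?_⟩
  have hα' : ‖α‖ ∈ Ioo (-1) 1 := ⟨by linarith [norm_nonneg α], hα⟩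
  simp only [← Complex.ofReal_tanh, tanh_artanh hα', u, mul_comm _ (‖α‖ : ℂ),
    Complex.norm_mul_exp_arg_mul_I]

end DiscLengths

section Domains

variable {E : Type*} [NormedAddCommGroup E] [NormedSpace ℂ E] {D : Set E} {a b : E}

lemma exists_differentiable_extend_bernsteinApproximation (m : ℕ) (f : C(unitInterval, E)) :
    ∃ P : ℂ → E, Differentiable ℂ P ∧
      ∀ x : unitInterval, P (x : ℝ) = bernsteinApproximation m f x := by
  refine ⟨fun ζ ↦ ∑ k : Fin (m + 1),
    ((m.choose k : ℂ) * ζ ^ (k : ℕ) * (1 - ζ) ^ (m - (k : ℕ))) • f (bernstein.z k),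
    by fun_prop, fun x ↦ ?_⟩
  rw [bernsteinApproximation.apply]
  refine Finset.sum_congr rfl fun k _ ↦ ?_
  rw [bernstein_apply, ← Complex.coe_smul]
  push_cast
  rfl

lemma exists_differentiable_joining (hD : IsOpen D) (hDc : IsPreconnected D) (ha : a ∈ D)
    (hb : b ∈ D) : ∃ P : ℂ → E, Differentiable ℂ P ∧ P 0 = a ∧ P 1 = b ∧
      ∀ x ∈ Icc (0 : ℝ) 1, P x ∈ D := by
  obtain ⟨γ, hγ⟩ := (hD.isConnected_iff_isPathConnected.1 ⟨⟨a, ha⟩, hDc⟩).joinedIn a ha b hb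
  let f : C(unitInterval, E) := γ.toContinuousMap
  obtain ⟨ε, hε, hεD⟩ := (isCompact_range f.continuous).exists_thickening_subset_open hD
    (range_subset_iff.2 hγ)
  obtain ⟨m, hmε, hm₀⟩ := ((Metric.tendsto_nhds.1 (bernsteinApproximation_uniform f) ε hε).and
    (Filter.eventually_ne_atTop 0)).exists
  obtain ⟨P, hP, hPf⟩ := exists_differentiable_extend_bernsteinApproximation m f
  refine ⟨P, hP, ?_, ?_, fun x hx ↦ hεD (mem_thickening_iff.2 ⟨f ⟨x, hx⟩, mem_range_self _, ?_⟩)⟩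
  · simpa [f] using hPf 0
  · simpa [f, bernsteinApproximation.apply_one hm₀] using hPf 1
  · rw [hPf ⟨x, hx⟩]
    exact (ContinuousMap.dist_apply_le_dist _).trans_lt hmε

lemma exists_strip_mapsTo_of_periodic {X : Type*} [TopologicalSpace X] {f : ℂ → X} {D : Set X}
    (hf : Continuous f) (hD : IsOpen D) {c : ℝ} (hc : 0 < c) (hper : Function.Periodic f c)
    (hfD : ∀ x : ℝ, f x ∈ D) : ∃ δ > 0, ∀ z : ℂ, |z.im| < δ → f z ∈ D := by
  have hcompact : IsCompact (Complex.ofReal '' Icc 0 c) :=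
    isCompact_Icc.image Complex.continuous_ofReal
  obtain ⟨δ, hδ, hδD⟩ := hcompact.exists_thickening_subset_open (hD.preimage hf)
    (image_subset_iff.2 fun x _ ↦ hfD x)
  refine ⟨δ, hδ, fun z hz ↦ ?_⟩
  have hre := Ico_subset_Icc_self (toIcoMod_mem_Ico' hc z.re)
  rw [← hper.sub_zsmul_eq (toIcoDiv hc 0 z.re)]
  refine hδD (mem_thickening_iff.2 ⟨_, mem_image_of_mem _ hre, ?_⟩)
  have hdiff : z - toIcoDiv hc 0 z.re • (c : ℂ) - (toIcoMod hc 0 z.re : ℝ) = z.im * Complex.I := by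
    rw [toIcoMod]
    apply Complex.ext <;> simp
  rwa [dist_eq_norm, hdiff, norm_mul, Complex.norm_I, mul_one, Complex.norm_real]

/-- If `P` is entire with `P [0, 1] ⊆ D`, then `z ↦ P (sin z ^ 2)` is periodic and maps `ℝ` into
`D`, hence also a whole strip around `ℝ`. -/
lemma discLengths_nonempty (hD : IsOpen D) (hDc : IsPreconnected D) (ha : a ∈ D) (hb : b ∈ D) :
    (discLengths D a b).Nonempty := by
  obtain ⟨P, hP, rfl, rfl, hPD⟩ := exists_differentiable_joining hD hDc ha hb
  obtain ⟨δ, hδ, hδD⟩ := exists_strip_mapsTo_of_periodic (f := fun z ↦ P (Complex.sin z ^ 2))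
    (hP.continuous.comp (Complex.continuous_sin.pow 2)) hD Real.two_pi_pos
    (fun z ↦ by simp [Complex.sin_add_two_pi])
    fun x ↦ by simpa using hPD _ ⟨sq_nonneg (Real.sin x), Real.sin_sq_le_one x⟩
  let s : ℝ := 4 * δ / Real.pi
  have hs : 0 < s := by positivity
  have hscale : MapsTo (fun z : ℂ ↦ P (Complex.sin (s * z) ^ 2)) strip D := fun z hz ↦ by
    refine hδD (s * z) ?_
    calc |(s * z).im| = s * |z.im| := by rw [Complex.im_ofReal_mul, abs_mul, abs_of_pos hs]
      _ < s * (Real.pi / 4) := by gcongr; exact hz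
      _ = δ := by simp only [s]; field_simp
  have hholo : Differentiable ℂ fun z : ℂ ↦ P (Complex.sin (s * z) ^ 2) :=
    hP.comp ((Complex.differentiable_sin.comp (differentiable_id.const_mul _)).pow 2)
  have hend : (s : ℂ) * (Real.pi / 2 / s : ℝ) = (Real.pi / 2 : ℝ) := by
    rw [← Complex.ofReal_mul, mul_div_cancel₀ _ hs.ne']
  refine ⟨Real.pi / 2 / s - 0, ?_⟩
  have hmem := sub_mem_discLengths hholo.differentiableOn hscale
    (show (0 : ℝ) ≤ Real.pi / 2 / s by positivity)
  simp only [hend, ← Complex.ofReal_sin, Real.sin_pi_div_two] at hmem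
  simpa using hmem

end Domains

section Kobayashi

variable {E : Type*} [NormedAddCommGroup E] [NormedSpace ℂ E] {D : Set E} {a b z w : E} {r t : ℝ}

lemma lempert_nonneg (D : Set E) (a b : E) : 0 ≤ lempert D a b :=
  Real.sInf_nonneg fun _ ↦ nonneg_of_mem_discLengths

lemma lempert_le (ht : t ∈ discLengths D a b) : lempert D a b ≤ t :=
  csInf_le ⟨0, fun _ ↦ nonneg_of_mem_discLengths⟩ ht

lemma sum_lempert_nonneg (D : Set E) (m : ℕ) (c : ℕ → E) :
    0 ≤ ∑ i ∈ Finset.range m, lempert D (c i) (c (i + 1)) :=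
  Finset.sum_nonneg fun i _ ↦ lempert_nonneg D (c i) (c (i + 1))

lemma kobayashi_nonneg (D : Set E) (z w : E) : 0 ≤ kobayashi D z w := by
  refine Real.sInf_nonneg ?_
  rintro _ ⟨m, c, -, -, -, rfl⟩
  exact sum_lempert_nonneg D m c

lemma kobayashi_le_sum {m : ℕ} {c : ℕ → E} (hc : ∀ i ≤ m, c i ∈ D) :
    kobayashi D (c 0) (c m) ≤ ∑ i ∈ Finset.range m, lempert D (c i) (c (i + 1)) := by
  refine csInf_le ⟨0, ?_⟩ ⟨m, c, rfl, rfl, hc, rfl⟩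
  rintro _ ⟨m, c, -, -, -, rfl⟩
  exact sum_lempert_nonneg D m c

lemma exists_chain_sum_lt (hz : z ∈ D) (hw : w ∈ D) (hr : kobayashi D z w < r) :
    ∃ (m : ℕ) (c : ℕ → E), c 0 = z ∧ c m = w ∧ (∀ i ≤ m, c i ∈ D) ∧
      ∑ i ∈ Finset.range m, lempert D (c i) (c (i + 1)) < r := by
  have htwo : ∀ i : ℕ, i ≤ 1 → (if i = 0 then z else w) ∈ D := fun i _ ↦ by
    split_ifs <;> assumption
  rw [kobayashi] at hr
  obtain ⟨_, ⟨m, c, hc₀, hcm, hcD, rfl⟩, hlt⟩ := exists_lt_of_csInf_lt (by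
    exact ⟨_, 1, fun i ↦ if i = 0 then z else w, if_pos rfl, if_neg one_ne_zero, htwo, rfl⟩) hr
  exact ⟨m, c, hc₀, hcm, hcD, hlt⟩

lemma le_kobayashi (hz : z ∈ D) (hw : w ∈ D)
    (h : ∀ (m : ℕ) (c : ℕ → E), c 0 = z → c m = w → (∀ i ≤ m, c i ∈ D) →
      r ≤ ∑ i ∈ Finset.range m, lempert D (c i) (c (i + 1))) : r ≤ kobayashi D z w := by
  refine le_of_forall_gt fun s hs ↦ ?_
  obtain ⟨m, c, hc₀, hcm, hcD, hlt⟩ := exists_chain_sum_lt hz hw hs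
  exact (h m c hc₀ hcm hcD).trans_lt hlt

lemma kobayashi_self_nonpos (hz : z ∈ D) : kobayashi D z z ≤ 0 := by
  simpa using kobayashi_le_sum (m := 0) (c := fun _ ↦ z) fun _ _ ↦ hz

lemma kobayashi_le_lempert_add (ha : a ∈ D) (hb : b ∈ D) (hw : w ∈ D) :
    kobayashi D a w ≤ lempert D a b + kobayashi D b w := by
  rw [← sub_le_iff_le_add']
  refine le_kobayashi hb hw fun m c hc₀ hcm hcD ↦ ?_
  let c' : ℕ → E
    | 0 => a
    | i + 1 => c i
  have hcons := kobayashi_le_sum (m := m + 1) (c := c') fun i hi ↦ by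
    cases i with
    | zero => exact ha
    | succ i => exact hcD i (Nat.le_of_succ_le_succ hi)
  rw [Finset.sum_range_succ'] at hcons
  simp only [c', hc₀, hcm] at hcons
  linarith

lemma kobayashi_le_of_mem_discLengths (ht : t ∈ discLengths D a b) : kobayashi D a b ≤ t := by
  have hb := right_mem_of_mem_discLengths ht
  linarith [kobayashi_le_lempert_add (left_mem_of_mem_discLengths ht) hb hb,
    lempert_le ht, kobayashi_self_nonpos hb]

lemma kobayashi_le_sum_add {m : ℕ} {c : ℕ → E} (hc : ∀ i ≤ m, c i ∈ D) (hw : w ∈ D) :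
    kobayashi D (c 0) w ≤
      ∑ i ∈ Finset.range m, lempert D (c i) (c (i + 1)) + kobayashi D (c m) w := by
  induction m with
  | zero => simp
  | succ m ih =>
    rw [Finset.sum_range_succ]
    linarith [ih fun i hi ↦ hc i (hi.trans m.le_succ),
      kobayashi_le_lempert_add (hc m m.le_succ) (hc (m + 1) le_rfl) hw]

lemma kobayashi_triangle (ha : a ∈ D) (hb : b ∈ D) (hw : w ∈ D) :
    kobayashi D a w ≤ kobayashi D a b + kobayashi D b w := by
  rw [← sub_le_iff_le_add]
  refine le_kobayashi ha hb fun m c hc₀ hcm hcD ↦ ?_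
  have hsum := kobayashi_le_sum_add hcD hw
  rw [hc₀, hcm] at hsum
  linarith

lemma dist_le_diam_mul_lempert (hD : IsOpen D) (hDc : IsPreconnected D)
    (hDb : Bornology.IsBounded D) (ha : a ∈ D) (hb : b ∈ D) :
    dist a b ≤ diam D * lempert D a b := by
  rw [lempert, ← smul_eq_mul, ← Real.sInf_smul_of_nonneg diam_nonneg]
  refine le_csInf (discLengths_nonempty hD hDc ha hb).smul_set ?_
  rintro _ ⟨t, ht, rfl⟩
  exact dist_le_diam_mul_of_mem_discLengths hDb ht

lemma dist_le_diam_mul_kobayashi (hD : IsOpen D) (hDc : IsPreconnected D)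
    (hDb : Bornology.IsBounded D) (hz : z ∈ D) (hw : w ∈ D) :
    dist z w ≤ diam D * kobayashi D z w := by
  rcases (diam_nonneg (s := D)).eq_or_lt with hdiam | hdiam
  · simpa [← hdiam] using dist_le_diam_of_mem hDb hz hw
  · rw [← div_le_iff₀' hdiam]
    refine le_kobayashi hz hw fun m c hc₀ hcm hcD ↦ ?_
    rw [div_le_iff₀' hdiam, Finset.mul_sum, ← hc₀, ← hcm]
    exact (dist_le_range_sum_dist c m).trans <| Finset.sum_le_sum fun i hi ↦
      dist_le_diam_mul_lempert hD hDc hDb (hcD i (Finset.mem_range.1 hi).le)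
        (hcD (i + 1) (Finset.mem_range.1 hi))

end Kobayashi

section DiscChains

variable {E : Type*} [NormedAddCommGroup E] [NormedSpace ℂ E] {D : Set E} {δ : ℝ} {a b z w : E}
  {r t S T : ℝ}

/-- `DiscChain D δ a b T`: finitely many holomorphic discs in `D`, each of length at most `δ`,
lead from `a` to `b` with total length `T`. -/
inductive DiscChain (D : Set E) (δ : ℝ) (a : E) : E → ℝ → Prop
  | refl : DiscChain D δ a a 0
  | snoc {b c : E} {T t : ℝ} : DiscChain D δ a b T → t ∈ discLengths D b c → t ≤ δ →
      DiscChain D δ a c (T + t)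

lemma DiscChain.nonneg (h : DiscChain D δ a b T) : 0 ≤ T := by
  induction h with
  | refl => exact le_rfl
  | snoc _ ht _ ih => exact add_nonneg ih (nonneg_of_mem_discLengths ht)

lemma DiscChain.trans (hab : DiscChain D δ a b S) (hbw : DiscChain D δ b w T) :
    DiscChain D δ a w (S + T) := by
  induction hbw with
  | refl => simpa using hab
  | snoc _ ht htδ ih => simpa only [add_assoc] using ih.snoc ht htδ

lemma discChain_of_strip {F : ℂ → E} (hF : DifferentiableOn ℂ F strip) (hFD : MapsTo F strip D)
    {h : ℝ} (hh : 0 ≤ h) (hδ : h ≤ δ) (k : ℕ) : DiscChain D δ (F 0) (F (k * h : ℝ)) (k * h) := by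
  induction k with
  | zero => simpa using DiscChain.refl
  | succ k ih =>
    have hstep : ((k + 1 : ℕ) : ℝ) * h - k * h = h := by
      push_cast
      ring
    have hmem := sub_mem_discLengths hF hFD (s := k * h) (t := (k + 1 : ℕ) * h) (by linarith)
    have hsnoc := ih.snoc hmem (by rwa [hstep])
    rwa [add_sub_cancel] at hsnoc

lemma discChain_of_mem_discLengths (hδ : 0 < δ) (ht : t ∈ discLengths D a b) :
    DiscChain D δ a b t := by
  obtain ⟨F, hF, hFD, rfl, rfl⟩ := exists_strip_of_mem_discLengths ht
  have ht₀ := nonneg_of_mem_discLengths ht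
  obtain ⟨N, hN⟩ := exists_nat_gt (t / δ)
  have hN₀ : (0 : ℝ) < N := lt_of_le_of_lt (by positivity) hN
  have hsmall : t / N ≤ δ := by
    rw [div_lt_iff₀ hδ] at hN
    rw [div_le_iff₀ hN₀]
    linarith
  have hchain := discChain_of_strip hF hFD (h := t / N) (by positivity) hsmall N
  rwa [mul_div_cancel₀ _ hN₀.ne'] at hchain

lemma exists_discChain_of_sum_lt (hD : IsOpen D) (hDc : IsPreconnected D) (hδ : 0 < δ) {m : ℕ}
    {c : ℕ → E} (hc : ∀ i ≤ m, c i ∈ D)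
    (hr : ∑ i ∈ Finset.range m, lempert D (c i) (c (i + 1)) < r) :
    ∃ T < r, DiscChain D δ (c 0) (c m) T := by
  induction m generalizing r with
  | zero => exact ⟨0, by simpa using hr, .refl⟩
  | succ m ih =>
    rw [Finset.sum_range_succ, ← lt_sub_iff_add_lt] at hr
    obtain ⟨s, hs, hsr⟩ := exists_between hr
    obtain ⟨T, hTs, hT⟩ := ih (fun i hi ↦ hc i (hi.trans m.le_succ)) hs
    obtain ⟨t, ht, htr⟩ := exists_lt_of_csInf_lt
      (discLengths_nonempty hD hDc (hc m m.le_succ) (hc (m + 1) le_rfl)) (lt_sub_comm.1 hsr)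
    exact ⟨T + t, by linarith, hT.trans (discChain_of_mem_discLengths hδ ht)⟩

lemma le_kobayashi_of_forall_discChain (hD : IsOpen D) (hDc : IsPreconnected D) (hδ : 0 < δ)
    (hz : z ∈ D) (hw : w ∈ D) (h : ∀ T, DiscChain D δ z w T → r ≤ T) : r ≤ kobayashi D z w := by
  refine le_of_forall_gt fun s hs ↦ ?_
  obtain ⟨m, c, rfl, rfl, hcD, hlt⟩ := exists_chain_sum_lt hz hw hs
  obtain ⟨T, hTs, hT⟩ := exists_discChain_of_sum_lt hD hDc hδ hcD hlt
  exact (h T hT).trans_lt hTs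

end DiscChains

section Collar

variable {X : Type*} [PseudoMetricSpace X] {D K : Set X} {a b : X} {η : ℝ}

/-- The part of `closure D` at distance between `η` and `2 * η` from `K`: a compact layer through
which short steps leaving the `η`-neighborhood of `K` must pass. -/
def collarShell (D K : Set X) (η : ℝ) : Set X :=
  (closure D ∩ cthickening (2 * η) K) \ thickening η K

lemma isCompact_collarShell [ProperSpace X] (hD : Bornology.IsBounded D) :
    IsCompact (collarShell D K η) :=
  (hD.isCompact_closure.inter_right isClosed_cthickening).diff isOpen_thickening

lemma collarShell_subset_interior (hη : 0 < η) (hK : frontier D ⊆ K) :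
    collarShell D K η ⊆ interior D := by
  rintro a ⟨⟨haD, -⟩, haK⟩
  by_contra ha
  exact haK (self_subset_thickening hη K (hK ⟨haD, ha⟩))

lemma mem_collarShell (ha : a ∈ thickening η K) (hb : b ∈ D) (hab : dist a b < η)
    (hbK : b ∉ thickening η K) : b ∈ collarShell D K η := by
  obtain ⟨p, hp, hap⟩ := mem_thickening_iff.1 ha
  refine ⟨⟨subset_closure hb, thickening_subset_cthickening _ _ (mem_thickening_iff.2 ⟨p, hp, ?_⟩)⟩,
    hbK⟩
  linarith [dist_triangle_left b p a]

lemma ball_subset_of_mem_cthickening (hη : 0 < η) (ha : a ∈ cthickening (2 * η) K) :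
    ball a η ⊆ thickening (3 * η) K := by
  rw [show 3 * η = η + 2 * η by ring]
  exact (ball_subset_thickening ha η).trans (thickening_cthickening_subset η (by positivity) K)

end Collar

section Localization

variable {E : Type*} [NormedAddCommGroup E] [NormedSpace ℂ E] {D K O S U V W : Set E} {a b z w : E}
  {r s t η δ ρ B C T : ℝ}

/-- `KobayashiWithin O a b r`: the points `a` and `b` lie in the same connected component of `O`,
at Kobayashi distance at most `r` in that component. -/
def KobayashiWithin (O : Set E) (a b : E) (r : ℝ) : Prop :=
  b ∈ connectedComponentIn O a ∧ kobayashi (connectedComponentIn O a) a b ≤ r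

lemma KobayashiWithin.refl (ha : a ∈ O) : KobayashiWithin O a a 0 :=
  ⟨mem_connectedComponentIn ha, kobayashi_self_nonpos (mem_connectedComponentIn ha)⟩

lemma KobayashiWithin.mono (h : KobayashiWithin O a b r) (hrs : r ≤ s) : KobayashiWithin O a b s :=
  ⟨h.1, h.2.trans hrs⟩

lemma KobayashiWithin.trans (hab : KobayashiWithin O a b r) (hbw : KobayashiWithin O b w s) :
    KobayashiWithin O a w (r + s) := by
  obtain ⟨hb, hab⟩ := hab
  rw [KobayashiWithin, ← connectedComponentIn_eq hb] at hbw
  obtain ⟨hw, hbw⟩ := hbw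
  have ha : a ∈ connectedComponentIn O a :=
    mem_connectedComponentIn (connectedComponentIn_nonempty_iff.1 ⟨b, hb⟩)
  exact ⟨hw, (kobayashi_triangle ha hb hw).trans (add_le_add hab hbw)⟩

lemma kobayashiWithin_of_mem_discLengths (ht : t ∈ discLengths O a b) : KobayashiWithin O a b t :=
  have ht' := mem_discLengths_connectedComponentIn ht
  ⟨right_mem_of_mem_discLengths ht', kobayashi_le_of_mem_discLengths ht'⟩

lemma mapsTo_ofReal_mul_unit_ball (hρ₀ : 0 ≤ ρ) (hρ₁ : ρ ≤ 1) :
    MapsTo (fun ζ : ℂ ↦ ρ * ζ) (ball 0 1) (ball 0 1) := by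
  intro ζ hζ
  rw [mem_ball_zero_iff] at hζ ⊢
  rw [norm_mul, Complex.norm_of_nonneg hρ₀]
  exact mul_lt_one_of_nonneg_of_lt_one_right hρ₁ (norm_nonneg ζ) hζ

/-- Shrinking the parameter disc by the factor `ρ` keeps `φ` within `diam D * ρ` of `φ 0`. -/
lemma mapsTo_shrink_inter (hD : Bornology.IsBounded D) (hρ₀ : 0 ≤ ρ) (hρ₁ : ρ ≤ 1) (hη : 0 < η)
    (hρη : diam D * ρ ≤ η) {φ : ℂ → E} (hφ : DifferentiableOn ℂ φ (ball 0 1))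
    (hφD : MapsTo φ (ball 0 1) D) (hball : ball (φ 0) η ⊆ U) :
    MapsTo (fun ζ ↦ φ (ρ * ζ)) (ball 0 1) (D ∩ U) := by
  intro ζ hζ
  have hρζ := mapsTo_ofReal_mul_unit_ball hρ₀ hρ₁ hζ
  rw [mem_ball_zero_iff] at hζ
  refine ⟨hφD hρζ, hball (mem_ball'.2 ?_)⟩
  calc dist (φ 0) (φ (ρ * ζ)) ≤ diam D * ‖(ρ : ℂ) * ζ‖ :=
        dist_le_diam_mul_norm hD hφ hφD (mem_ball_zero_iff.1 hρζ)
    _ = diam D * ρ * ‖ζ‖ := by rw [norm_mul, Complex.norm_of_nonneg hρ₀, mul_assoc]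
    _ ≤ η * ‖ζ‖ := by gcongr
    _ < η := mul_lt_of_lt_one_right hη hζ

lemma kobayashiWithin_inter_of_ball_subset (hD : Bornology.IsBounded D) (hρ₀ : 0 < ρ) (hρ₁ : ρ ≤ 1)
    (hη : 0 < η) (hρη : diam D * ρ ≤ η) (hball : ball a η ⊆ U) (ht : t ∈ discLengths D a b)
    (htρ : t ≤ ρ / 2) : KobayashiWithin (D ∩ U) a b (2 / ρ * t) := by
  obtain ⟨α, hα, ⟨φ, hφ, hφD, rfl, rfl⟩, rfl⟩ := ht
  have hαt := le_artanh (norm_nonneg α) hα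
  have hnorm : ‖α / ρ‖ = ‖α‖ / ρ := by rw [norm_div, Complex.norm_of_nonneg hρ₀.le]
  have hhalf : ‖α‖ / ρ ≤ 1 / 2 := by
    rw [div_le_iff₀ hρ₀]
    linarith
  have hmem : artanh (‖α‖ / ρ) ∈ discLengths (D ∩ U) (φ 0) (φ α) :=
    ⟨α / ρ, by linarith, ⟨fun ζ ↦ φ (ρ * ζ),
      hφ.comp (differentiableOn_id.const_mul _) (mapsTo_ofReal_mul_unit_ball hρ₀.le hρ₁),
      mapsTo_shrink_inter hD hρ₀.le hρ₁ hη hρη hφ hφD hball, by simp,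
      by simp only [mul_div_cancel₀ α (Complex.ofReal_ne_zero.2 hρ₀.ne')]⟩, by rw [hnorm]⟩
  refine (kobayashiWithin_of_mem_discLengths hmem).mono ?_
  calc artanh (‖α‖ / ρ) ≤ 2 * (‖α‖ / ρ) := artanh_le_two_mul (by positivity) hhalf
    _ = 2 / ρ * ‖α‖ := by ring
    _ ≤ 2 / ρ * artanh ‖α‖ := by gcongr

lemma kobayashiWithin_of_ball_subset (hball : ball a r ⊆ O) (hb : dist b a < r / 2) :
    KobayashiWithin O a b (artanh (1 / 2)) := by
  refine kobayashiWithin_of_mem_discLengths ⟨1 / 2, by norm_num,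
    ⟨fun ζ ↦ a + (2 * ζ) • (b - a), by fun_prop, fun ζ hζ ↦ hball ?_, by simp, by simp⟩,
    by norm_num⟩
  rw [mem_ball_zero_iff] at hζ
  rw [dist_eq_norm] at hb
  rw [mem_ball_iff_norm, add_sub_cancel_left, norm_smul, norm_mul, Complex.norm_two]
  nlinarith [norm_nonneg ζ, norm_nonneg (b - a)]

lemma exists_kobayashiWithin_bound (hO : IsOpen O) (hS : IsCompact S) (hSO : S ⊆ O) :
    ∃ B, 0 ≤ B ∧ ∀ a ∈ S, ∀ b ∈ S, b ∈ connectedComponentIn O a → KobayashiWithin O a b B := by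
  obtain ⟨r, hr, hrO⟩ := hS.exists_thickening_subset_open hO hSO
  have hball {a : E} (ha : a ∈ S) : ball a r ⊆ O := (ball_subset_thickening ha r).trans hrO
  obtain ⟨F, hFS, hF, hSF⟩ := hS.finite_cover_balls (half_pos hr)
  obtain ⟨M, hM⟩ := (hF.image2 (fun p q ↦ kobayashi (connectedComponentIn O p) p q) hF).bddAbove
  have hdisc : 0 ≤ artanh (1 / 2) := artanh_nonneg (by norm_num) (by norm_num)
  refine ⟨artanh (1 / 2) + (max M 0 + artanh (1 / 2)), by positivity, fun a ha b hb hab ↦ ?_⟩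
  obtain ⟨p, hpF, hap⟩ := mem_iUnion₂.1 (hSF ha)
  obtain ⟨q, hqF, hbq⟩ := mem_iUnion₂.1 (hSF hb)
  have hpa : KobayashiWithin O a p (artanh (1 / 2)) :=
    kobayashiWithin_of_ball_subset (hball ha) (mem_ball'.1 hap)
  have hqb : KobayashiWithin O q b (artanh (1 / 2)) :=
    kobayashiWithin_of_ball_subset (hball (hFS hqF)) hbq
  have hpq : KobayashiWithin O p q (max M 0) := by
    refine ⟨?_, (hM (mem_image2_of_mem hpF hqF)).trans (le_max_left M 0)⟩
    rw [← connectedComponentIn_eq hpa.1, connectedComponentIn_eq hab,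
      ← connectedComponentIn_eq hqb.1]
    exact mem_connectedComponentIn (hSO (hFS hqF))
  exact hpa.trans (hpq.trans hqb)


lemma KobayashiWithin.dist_le_diam_mul (hO : IsOpen O) (hOb : Bornology.IsBounded O)
    (h : KobayashiWithin O a b r) : dist a b ≤ diam O * r := by
  have hbdd := hOb.subset (connectedComponentIn_subset O a)
  have ha := mem_connectedComponentIn (connectedComponentIn_nonempty_iff.1 ⟨b, h.1⟩)
  calc dist a b ≤ diam (connectedComponentIn O a) * kobayashi (connectedComponentIn O a) a b :=
        dist_le_diam_mul_kobayashi hO.connectedComponentIn isPreconnected_connectedComponentIn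
          hbdd ha h.1
    _ ≤ diam (connectedComponentIn O a) * r := by gcongr; exact h.2
    _ ≤ diam O * r := by
        have hr : 0 ≤ r := (kobayashi_nonneg _ a b).trans h.2
        gcongr
        exact diam_mono (connectedComponentIn_subset O a) hOb

lemma DiscChain.kobayashiWithin_or_exists_excursion (hC : 0 ≤ C)
    (hstep : ∀ a b t, t ∈ discLengths D a b → t ≤ δ → a ∈ W ∨ b ∈ W →
      KobayashiWithin O a b (C * t) ∧ (a ∈ W ∨ a ∈ S) ∧ (b ∈ W ∨ b ∈ S))
    (hzO : z ∈ O) (hzW : z ∈ W) (h : DiscChain D δ z w T) :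
    w ∈ W ∧ KobayashiWithin O z w (C * T) ∨ ∃ p ∈ S, KobayashiWithin O z p (C * T) ∧
      (w ∈ W → ∃ q ∈ S, KobayashiWithin O q w (C * T)) := by
  induction h with
  | refl => exact .inl ⟨hzW, by simpa using KobayashiWithin.refl hzO⟩
  | @snoc b w T t hchain ht htδ ih =>
    have hT := hchain.nonneg
    have ht₀ := nonneg_of_mem_discLengths ht
    rw [mul_add]
    obtain ⟨hbW, hzb⟩ | ⟨p, hpS, hzp, hback⟩ := ih
    · obtain ⟨hbw, -, hw⟩ := hstep b w t ht htδ (.inl hbW)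
      by_cases hwW : w ∈ W
      · exact .inl ⟨hwW, hzb.trans hbw⟩
      · exact .inr ⟨w, hw.resolve_left hwW, hzb.trans hbw, fun h ↦ absurd h hwW⟩
    · refine .inr ⟨p, hpS, hzp.mono (le_add_of_nonneg_right (by positivity)), fun hwW ↦ ?_⟩
      obtain ⟨hbw, hbW | hbS, -⟩ := hstep b w t ht htδ (.inr hwW)
      · obtain ⟨q, hqS, hqb⟩ := hback hbW
        exact ⟨q, hqS, hqb.trans hbw⟩
      · exact ⟨b, hbS, hbw.mono (le_add_of_nonneg_left (by positivity))⟩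

lemma kobayashiWithin_of_mem_thickening (hD : Bornology.IsBounded D) (hη : 0 < η)
    (hU : thickening (3 * η) K ⊆ U) (hρ₀ : 0 < ρ) (hρ₁ : ρ ≤ 1) (hρη : diam D * ρ ≤ η)
    (ht : t ∈ discLengths D a b) (htρ : t ≤ ρ / 2)
    (hK : a ∈ thickening η K ∨ b ∈ thickening η K) :
    KobayashiWithin (D ∩ U) a b (2 / ρ * t) ∧
      (a ∈ thickening η K ∨ a ∈ collarShell D K η) ∧
      (b ∈ thickening η K ∨ b ∈ collarShell D K η) := by
  have hab : dist a b < η := by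
    nlinarith [dist_le_diam_mul_of_mem_discLengths hD ht, diam_nonneg (s := D)]
  have ha : a ∈ thickening η K ∨ a ∈ collarShell D K η := or_iff_not_imp_left.2 fun ha ↦
    mem_collarShell (hK.resolve_left ha) (left_mem_of_mem_discLengths ht) (dist_comm a b ▸ hab) ha
  have hb : b ∈ thickening η K ∨ b ∈ collarShell D K η := or_iff_not_imp_left.2 fun hb ↦
    mem_collarShell (hK.resolve_right hb) (right_mem_of_mem_discLengths ht) hab hb
  have hball : ball a η ⊆ U := by
    refine (ball_subset_of_mem_cthickening hη ?_).trans hU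
    exact ha.elim (thickening_subset_cthickening_of_le (by linarith) K ·) (·.1.2)
  exact ⟨kobayashiWithin_inter_of_ball_subset hD hρ₀ hρ₁ hη hρη hball ht htρ, ha, hb⟩

/-- An excursion out of the collar has length bounded below in terms of `η` and `diam D`, so the
additive cost `B` of joining its two ends inside the shell is absorbed into the factor of `T`. -/
lemma kobayashiWithin_of_discChain (hD : IsOpen D) (hDb : Bornology.IsBounded D) (hU : IsOpen U)
    (hη : 0 < η) (hKU : thickening (3 * η) K ⊆ U) (hρ₀ : 0 < ρ) (hρ₁ : ρ ≤ 1)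
    (hρη : diam D * ρ ≤ η) (hB : 0 ≤ B)
    (hshell : ∀ p ∈ collarShell D K η, ∀ q ∈ collarShell D K η,
      q ∈ connectedComponentIn (D ∩ U) p → KobayashiWithin (D ∩ U) p q B)
    (hz : z ∈ K) (hzw : w ∈ connectedComponentIn (D ∩ U) z) (hw : w ∈ K)
    (h : DiscChain D (ρ / 2) z w T) :
    KobayashiWithin (D ∩ U) z w ((2 + B * diam D / η) * (2 / ρ * T)) := by
  have hT := h.nonneg
  have hzO := connectedComponentIn_nonempty_iff.1 ⟨w, hzw⟩
  obtain ⟨-, hle⟩ | ⟨p, hp, hzp, hback⟩ := h.kobayashiWithin_or_exists_excursion (by positivity)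
    (fun _ _ _ ht htρ hK ↦ kobayashiWithin_of_mem_thickening hDb hη hKU hρ₀ hρ₁ hρη ht htρ hK)
    hzO (self_subset_thickening hη K hz)
  · refine hle.mono (le_mul_of_one_le_left (by positivity) ?_)
    linarith [show 0 ≤ B * diam D / η by positivity]
  obtain ⟨q, hq, hqw⟩ := hback (self_subset_thickening hη K hw)
  have hpq : KobayashiWithin (D ∩ U) p q B := by
    refine hshell p hp q hq ?_
    rw [← connectedComponentIn_eq hzp.1, connectedComponentIn_eq hzw,
      ← connectedComponentIn_eq hqw.1]
    exact mem_connectedComponentIn (connectedComponentIn_nonempty_iff.1 ⟨w, hqw.1⟩)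
  have hcross : η ≤ diam D * (2 / ρ * T) := calc
    η ≤ dist z p := not_lt.1 fun hlt ↦ hp.2 (mem_thickening_iff.2 ⟨z, hz, dist_comm z p ▸ hlt⟩)
    _ ≤ diam (D ∩ U) * (2 / ρ * T) :=
      hzp.dist_le_diam_mul (hD.inter hU) (hDb.subset inter_subset_left)
    _ ≤ diam D * (2 / ρ * T) := by
      gcongr
      exact diam_mono inter_subset_left hDb
  have habsorb : B ≤ B * diam D / η * (2 / ρ * T) := calc
    B = B / η * η := (div_mul_cancel₀ B hη.ne').symm
    _ ≤ B / η * (diam D * (2 / ρ * T)) := by gcongr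
    _ = B * diam D / η * (2 / ρ * T) := by ring
  exact (hzp.trans (hpq.trans hqw)).mono (by linarith)

lemma exists_kobayashiWithin_le_mul [ProperSpace E] (hD : IsOpen D) (hDb : Bornology.IsBounded D)
    (hU : IsOpen U) (hK : IsCompact K) (hDK : frontier D ⊆ K) (hKU : K ⊆ U) :
    ∃ δ > 0, ∃ A > 0, ∀ z ∈ K, ∀ w ∈ K, w ∈ connectedComponentIn (D ∩ U) z →
      ∀ T, DiscChain D δ z w T → KobayashiWithin (D ∩ U) z w (A * T) := by
  obtain ⟨ε, hε, hεU⟩ := hK.exists_thickening_subset_open hU hKU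
  obtain ⟨η, hη, hηU⟩ : ∃ η > 0, thickening (3 * η) K ⊆ U :=
    ⟨ε / 3, by positivity, by rwa [mul_div_cancel₀ ε three_ne_zero]⟩
  have hshell : collarShell D K η ⊆ D ∩ U := subset_inter
    ((collarShell_subset_interior hη hDK).trans interior_subset) fun p hp ↦
    hηU (ball_subset_of_mem_cthickening hη hp.1.2 (mem_ball_self hη))
  obtain ⟨B, hB, hBshell⟩ :=
    exists_kobayashiWithin_bound (hD.inter hU) (isCompact_collarShell hDb) hshell
  have hdiam : 0 ≤ diam D := diam_nonneg
  have hden : 0 < η + diam D := by positivity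
  let ρ := η / (η + diam D)
  have hρ₀ : 0 < ρ := by positivity
  have hρ₁ : ρ ≤ 1 := (div_le_one hden).2 (by linarith)
  have hρη : diam D * ρ ≤ η := by
    rw [mul_div_left_comm]
    exact mul_le_of_le_one_right hη.le ((div_le_one hden).2 (by linarith))
  refine ⟨ρ / 2, by positivity, (2 + B * diam D / η) * (2 / ρ), by positivity,
    fun z hz w hw hzw T hT ↦ ?_⟩
  rw [mul_assoc]
  exact kobayashiWithin_of_discChain hD hDb hU hη hηU hρ₀ hρ₁ hρη hB hBshell hz hzw hw hT

theorem kobayashi_localization_general [ProperSpace E] (hD : IsOpen D) (hDc : IsPreconnected D)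
    (hDb : Bornology.IsBounded D) (hU : IsOpen U) (hDV : frontier D ⊆ V) (hVU : closure V ⊆ U) :
    ∃ c : ℝ, 0 < c ∧ ∀ x, ∀ z ∈ connectedComponentIn (D ∩ U) x ∩ V,
      ∀ w ∈ connectedComponentIn (D ∩ U) x ∩ V,
        c * kobayashi (connectedComponentIn (D ∩ U) x) z w ≤ kobayashi D z w := by
  have hK : IsCompact (closure V ∩ closure D) := hDb.isCompact_closure.inter_left isClosed_closure
  obtain ⟨δ, hδ, A, hA, hAδ⟩ := exists_kobayashiWithin_le_mul hD hDb hU hK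
    (subset_inter (hDV.trans subset_closure) frontier_subset_closure) (inter_subset_left.trans hVU)
  refine ⟨A⁻¹, inv_pos.2 hA, fun x z hz w hw ↦ ?_⟩
  have hDx : connectedComponentIn (D ∩ U) x ⊆ D :=
    (connectedComponentIn_subset _ x).trans inter_subset_left
  have hmem {y : E} (hy : y ∈ connectedComponentIn (D ∩ U) x ∩ V) : y ∈ closure V ∩ closure D :=
    ⟨subset_closure hy.2, subset_closure (hDx hy.1)⟩
  refine le_kobayashi_of_forall_discChain hD hDc hδ (hDx hz.1) (hDx hw.1) fun T hT ↦ ?_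
  rw [connectedComponentIn_eq hz.1] at hw ⊢
  rw [inv_mul_le_iff₀ hA]
  exact (hAδ z (hmem hz) w (hmem (connectedComponentIn_eq hz.1 ▸ hw)) hw.1 T hT).2

end Localization

/-- **Proposition A4.** Let `D` be a bounded domain in `ℂⁿ` and `U, V` open
neighborhoods of `∂D` with `cl(V)` a compact subset of `U`. Then there is a constant
`c > 0` such that for every connected component `D'` of `D ∩ U` one has
`c · k_{D'}(z,w) ≤ k_D(z,w)` for all `z, w ∈ D' ∩ V`. -/
theorem kobayashi_localization
    (n : ℕ) (D : Set (EuclideanSpace ℂ (Fin n)))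
    (hDopen : IsOpen D) (hDconn : IsConnected D) (hDbdd : Bornology.IsBounded D)
    (U V : Set (EuclideanSpace ℂ (Fin n))) (hU : IsOpen U) (hV : IsOpen V)
    (hUfr : frontier D ⊆ U) (hVfr : frontier D ⊆ V)
    (hVU : closure V ⊆ U) (hVcpt : IsCompact (closure V)) :
    ∃ c : ℝ, 0 < c ∧ ∀ x ∈ D ∩ U,
      ∀ z ∈ connectedComponentIn (D ∩ U) x ∩ V,
        ∀ w ∈ connectedComponentIn (D ∩ U) x ∩ V,
          c * kobayashi (connectedComponentIn (D ∩ U) x) z w ≤ kobayashi D z w := by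
  obtain ⟨c, hc, h⟩ := kobayashi_localization_general hDopen hDconn.isPreconnected hDbdd hU hVfr hVU
  exact ⟨c, hc, fun x _ ↦ h x⟩
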